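/- Let N, M ≥ 1 and let R ∈ ℝ^{N×M}. Consider one step of the alternating (Closest Multiplicative Decomposition) update: starting from a nonzero Ψ ∈ ℝ^N, set Φ*_j = (Σ_i Ψ_i R_{ij}) / (Σ_i Ψ_i²) for each j, and then, provided Σ_j (Φ*_j)² > 0, set Ψ*_i = (Σ_j Φ*_j R_{ij}) / (Σ_j (Φ*_j)²) for each i. Then the rank-one approximation error is monotonically non-increasing along the update: Σ_{i,j} (R_{ij} − Φ*_j Ψ*_i)² ≤ Σ_{i,j} (R_{ij} − Φ*_j Ψ_i)² ≤ Σ_{i,j} (R_{ij} − Φ_j Ψ_i)² for every Φ ∈ ℝ^M. -/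

import Mathlib

theorem cmd_ls_aux {n : ℕ} (a r : Fin n → ℝ) (ha : 0 < ∑ i, (a i) ^ 2) (c d : ℝ)
    (hc : c = (∑ i, a i * r i) / (∑ i, (a i) ^ 2)) :
    ∑ i, (r i - a i * c) ^ 2 ≤ ∑ i, (r i - a i * d) ^ 2 := by
  have key : ∀ t : ℝ, ∑ i, (r i - a i * t) ^ 2
      = ∑ i, (r i) ^ 2 - 2 * t * ∑ i, a i * r i + t ^ 2 * ∑ i, (a i) ^ 2 := by
    intro t
    rw [Finset.mul_sum, Finset.mul_sum, ← Finset.sum_sub_distrib, ← Finset.sum_add_distrib]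
    exact Finset.sum_congr rfl fun i _ => by ring
  have h : ∑ i, a i * r i = c * ∑ i, (a i) ^ 2 := by
    rw [hc, div_mul_cancel₀ _ ha.ne']
  rw [key, key, h]
  nlinarith [mul_nonneg ha.le (sq_nonneg (c - d))]

/-- One step of the alternating Closest Multiplicative Decomposition update does
not increase the rank-one approximation error:
`err(Φ*, Ψ*) ≤ err(Φ*, Ψ) ≤ err(Φ, Ψ)` for every `Φ`. -/
theorem cmd_alternating_update_monotone
    (N M : ℕ) (hN : 1 ≤ N) (hM : 1 ≤ M)
    (R : Fin N → Fin M → ℝ) (Ψ : Fin N → ℝ)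
    (hΨ : 0 < ∑ i, (Ψ i) ^ 2)
    (Φstar : Fin M → ℝ)
    (hΦstar : ∀ j, Φstar j = (∑ i, Ψ i * R i j) / (∑ i, (Ψ i) ^ 2))
    (hΦpos : 0 < ∑ j, (Φstar j) ^ 2)
    (Ψstar : Fin N → ℝ)
    (hΨstar : ∀ i, Ψstar i = (∑ j, Φstar j * R i j) / (∑ j, (Φstar j) ^ 2)) :
    ∀ Φ : Fin M → ℝ,
      (∑ i, ∑ j, (R i j - Φstar j * Ψstar i) ^ 2 ≤
        ∑ i, ∑ j, (R i j - Φstar j * Ψ i) ^ 2) ∧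
      (∑ i, ∑ j, (R i j - Φstar j * Ψ i) ^ 2 ≤
        ∑ i, ∑ j, (R i j - Φ j * Ψ i) ^ 2) := by
  intro Φ
  constructor
  · exact Finset.sum_le_sum fun i _ => cmd_ls_aux Φstar (R i) hΦpos _ _ (hΨstar i)
  · rw [Finset.sum_comm, Finset.sum_comm (f := fun i j => (R i j - Φ j * Ψ i) ^ 2)]
    refine Finset.sum_le_sum fun j _ => ?_
    have := cmd_ls_aux Ψ (fun i => R i j) hΨ _ (Φ j) (hΦstar j)
    simpa only [mul_comm] using this
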